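/- arXiv:1905.01891 — 2 statements merged into one kernel-verified Lean document; each statement's English description precedes it below -/
import Mathlib

section
/- Let (a_j)_{j≥0} be a real sequence with a_j ~ j^{-β}, 1/2<β<1, and set d_{n,j} = ∑_{k=1}^n a_{k-j} for j≤0 and d_{n,j} = ∑_{k=j}^n a_{k-j} for 1≤j≤n. Then ∑_{j=-∞}^n d_{n,j}^2 ~ C n^{3-2β} as n→∞, where C = ∫_0^∞ (∫_0^1 (u+z)^{-β} du)^2 dz + ∫_0^1 (∫_0^{1-z} u^{-β} du)^2 dz. -/
open MeasureTheory Filter intervalIntegral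

/-- Extension of a one-sided filter `(a_j)_{j ≥ 0}` to `ℤ` by zero. -/
noncomputable def filterZ (a : ℕ → ℝ) (i : ℤ) : ℝ := if 0 ≤ i then a i.toNat else 0

/-- The coefficients `d_{n,j} = ∑_{k=1}^n a_{k-j}` (with `a_i = 0` for `i < 0`),
which for `1 ≤ j ≤ n` agrees with `∑_{k=j}^n a_{k-j}`. -/
noncomputable def dCoef (a : ℕ → ℝ) (n : ℕ) (j : ℤ) : ℝ :=
  ∑ k ∈ Finset.Icc 1 n, filterZ a ((k : ℤ) - j)

/-!
Rescale the index by `j = -⌊n z⌋` and the coefficients by `n ^ (β - 1)`. Since the partial sums of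
`a` are asymptotic to `m ^ (1 - β) / (1 - β)` and `d_{n,j}` is a difference of two of them, the
rescaled coefficients converge pointwise to the kernel
`((1 + z)₊ ^ (1 - β) - z₊ ^ (1 - β)) / (1 - β)`, and they are dominated by a multiple of
`(1 + |z|) ^ (-β)`, which is square integrable because `1 / 2 < β`. The sum `∑ d_{n,j} ^ 2` is
exactly `n ^ (3 - 2 * β)` times the integral of the squared step function, so dominated convergence
gives the limit `∫ kernel ^ 2`, whose parts over `z > 0` and `-1 < z < 0` are the two terms of `C`.
-/

open scoped Topology

section PartialSums

theorem tendsto_sum_range_div_sum_range {a g : ℕ → ℝ} {l : ℝ} (hg : ∀ i, 0 < g i)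
    (hg_top : Tendsto (fun n ↦ ∑ i ∈ Finset.range n, g i) atTop atTop)
    (h : Tendsto (fun i ↦ a i / g i) atTop (𝓝 l)) :
    Tendsto (fun n ↦ (∑ i ∈ Finset.range n, a i) / ∑ i ∈ Finset.range n, g i) atTop (𝓝 l) := by
  have h_term : (fun i ↦ a i - l * g i) =o[atTop] g := by
    rw [Asymptotics.isLittleO_iff_tendsto fun i hi ↦ absurd hi (hg i).ne']
    rw [← tendsto_sub_nhds_zero_iff] at h
    refine h.congr fun i ↦ ?_
    rw [sub_div, mul_div_cancel_right₀ l (hg i).ne']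
  have h_sum := (h_term.sum_range (fun i ↦ (hg i).le) hg_top).tendsto_div_nhds_zero
  rw [← tendsto_sub_nhds_zero_iff]
  refine h_sum.congr' ?_
  filter_upwards [hg_top.eventually_gt_atTop 0] with n hn
  rw [Finset.sum_sub_distrib, ← Finset.mul_sum, sub_div, mul_div_cancel_right₀ l hn.ne']

theorem tendsto_add_one_rpow_sub_rpow_mul (s : ℝ) :
    Tendsto (fun i : ℕ ↦ (((i : ℝ) + 1) ^ s - (i : ℝ) ^ s) * (i : ℝ) ^ (1 - s)) atTop (𝓝 s) := by
  have h_deriv : HasDerivAt (fun x : ℝ ↦ x ^ s) s 1 := by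
    simpa using Real.hasDerivAt_rpow_const (x := 1) (p := s) (Or.inl one_ne_zero)
  have h_inv : Tendsto (fun i : ℕ ↦ (i : ℝ)⁻¹) atTop (𝓝[≠] 0) := by
    refine tendsto_nhdsWithin_iff.2 ⟨tendsto_inv_atTop_nhds_zero_nat, ?_⟩
    filter_upwards [eventually_gt_atTop 0] with i hi
    exact inv_ne_zero (Nat.cast_ne_zero.2 hi.ne')
  refine (h_deriv.tendsto_slope_zero.comp h_inv).congr' ?_
  filter_upwards [eventually_gt_atTop 0] with i hi
  have hi' : (0 : ℝ) < i := Nat.cast_pos.2 hi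
  have h_factor : (i : ℝ) + 1 = i * (1 + (i : ℝ)⁻¹) := by field_simp
  have h_mul : (i : ℝ) ^ (1 - s) * (i : ℝ) ^ s = i := by rw [← Real.rpow_add hi']; simp
  simp only [Function.comp_apply, inv_inv, smul_eq_mul, Real.one_rpow]
  rw [h_factor, Real.mul_rpow hi'.le (by positivity)]
  linear_combination (1 - (1 + (i : ℝ)⁻¹) ^ s) * h_mul

theorem tendsto_sum_range_div_rpow {β c : ℝ} (hβ : β < 1) {a : ℕ → ℝ}
    (ha : Tendsto (fun j : ℕ ↦ a j * (j : ℝ) ^ β) atTop (𝓝 c)) :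
    Tendsto (fun m : ℕ ↦ (∑ i ∈ Finset.range m, a i) / (m : ℝ) ^ (1 - β)) atTop
      (𝓝 (c / (1 - β))) := by
  have hs : 0 < 1 - β := sub_pos.2 hβ
  have h_telescope (m : ℕ) :
      ∑ i ∈ Finset.range m, (((i : ℝ) + 1) ^ (1 - β) - (i : ℝ) ^ (1 - β)) = (m : ℝ) ^ (1 - β) := by
    simpa [Real.zero_rpow hs.ne'] using
      Finset.sum_range_sub (fun i : ℕ ↦ (i : ℝ) ^ (1 - β)) m
  have h_pos (i : ℕ) : 0 < ((i : ℝ) + 1) ^ (1 - β) - (i : ℝ) ^ (1 - β) :=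
    sub_pos.2 (Real.rpow_lt_rpow i.cast_nonneg (lt_add_one _) hs)
  have h_top : Tendsto (fun m : ℕ ↦ (m : ℝ) ^ (1 - β)) atTop atTop :=
    (tendsto_rpow_atTop hs).comp tendsto_natCast_atTop_atTop
  have h_incr := tendsto_add_one_rpow_sub_rpow_mul (1 - β)
  rw [sub_sub_cancel] at h_incr
  have h_ratio : Tendsto (fun i : ℕ ↦ a i / (((i : ℝ) + 1) ^ (1 - β) - (i : ℝ) ^ (1 - β)))
      atTop (𝓝 (c / (1 - β))) := by
    refine (ha.div h_incr hs.ne').congr' ?_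
    filter_upwards [eventually_gt_atTop 0] with i hi
    exact mul_div_mul_right _ _ (Real.rpow_pos_of_pos (Nat.cast_pos.2 hi) β).ne'
  simpa only [h_telescope] using
    tendsto_sum_range_div_sum_range h_pos (by simpa only [h_telescope] using h_top) h_ratio

theorem exists_abs_le_mul_rpow {u : ℕ → ℝ} {s c : ℝ}
    (h : Tendsto (fun m : ℕ ↦ u m / (m : ℝ) ^ s) atTop (𝓝 c)) :
    ∃ K, 0 ≤ K ∧ ∀ m, 0 < m → |u m| ≤ K * (m : ℝ) ^ s := by
  have h_pos (m : ℕ) (hm : 0 < m) : 0 < (m : ℝ) ^ s := Real.rpow_pos_of_pos (Nat.cast_pos.2 hm) s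
  have h_bigO : u =O[atTop] fun m : ℕ ↦ (m : ℝ) ^ s := by
    refine Asymptotics.isBigO_of_div_tendsto_nhds ?_ c h
    filter_upwards [eventually_gt_atTop 0] with m hm h_zero
    exact absurd h_zero (h_pos m hm).ne'
  obtain ⟨K, hK, h_bound⟩ := Asymptotics.bound_of_isBigO_nat_atTop h_bigO
  refine ⟨K, hK.le, fun m hm ↦ ?_⟩
  simpa only [Real.norm_eq_abs, abs_of_pos (h_pos m hm)] using h_bound (h_pos m hm).ne'

end PartialSums

section Coefficients

theorem filterZ_eq_sum_range_sub (a : ℕ → ℝ) (i : ℤ) :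
    filterZ a i = ∑ l ∈ Finset.range (i + 1).toNat, a l - ∑ l ∈ Finset.range i.toNat, a l := by
  unfold filterZ
  split_ifs with hi
  · rw [Int.toNat_add hi zero_le_one, Int.toNat_one, Finset.sum_range_succ, add_sub_cancel_left]
  · rw [Int.toNat_of_nonpos (by omega), Int.toNat_of_nonpos (by omega), sub_self]

theorem dCoef_eq_sum_range_sub (a : ℕ → ℝ) (n : ℕ) (j : ℤ) :
    dCoef a n j =
      ∑ i ∈ Finset.range (n + 1 - j).toNat, a i - ∑ i ∈ Finset.range (1 - j).toNat, a i := by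
  induction n with
  | zero => simp [dCoef]
  | succ n ih =>
    have h_succ : dCoef a (n + 1) j = dCoef a n j + filterZ a (n + 1 - j) := by
      simp only [dCoef, Finset.sum_Icc_succ_top (Nat.le_add_left 1 n), Nat.cast_succ]
    rw [h_succ, ih, filterZ_eq_sum_range_sub, Nat.cast_succ, sub_add_eq_add_sub (n + 1 : ℤ) j 1]
    ring

theorem abs_dCoef_neg_le {a : ℕ → ℝ} {β K : ℝ} (hβ : 0 ≤ β) (hK : 0 ≤ K)
    (ha : ∀ i : ℕ, 0 < i → |a i| ≤ K * (i : ℝ) ^ (-β)) (n m : ℕ) :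
    |dCoef a n (-m)| ≤ n * (K * ((m : ℝ) + 1) ^ (-β)) := by
  have h_term (k : ℕ) (hk : k ∈ Finset.Icc 1 n) :
      |filterZ a ((k : ℤ) - -m)| ≤ K * ((m : ℝ) + 1) ^ (-β) := by
    have hk_pos : 1 ≤ k := (Finset.mem_Icc.1 hk).1
    have h_index : (k : ℤ) - -m = (k + m : ℕ) := by push_cast; ring
    rw [filterZ, h_index, if_pos (Int.natCast_nonneg _), Int.toNat_natCast]
    refine (ha (k + m) (by omega)).trans (mul_le_mul_of_nonneg_left ?_ hK)
    refine Real.rpow_le_rpow_of_nonpos (by positivity) ?_ (neg_nonpos.2 hβ)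
    push_cast
    rw [add_comm]
    gcongr
    exact_mod_cast hk_pos
  calc |dCoef a n (-m)| ≤ ∑ k ∈ Finset.Icc 1 n, |filterZ a ((k : ℤ) - -m)| :=
        Finset.abs_sum_le_sum_abs _ _
    _ ≤ ∑ _k ∈ Finset.Icc 1 n, K * ((m : ℝ) + 1) ^ (-β) := Finset.sum_le_sum h_term
    _ = n * (K * ((m : ℝ) + 1) ^ (-β)) := by simp

end Coefficients

section Scaling

/-- The rescaled partial-sum process `n ^ (β - 1) * ∑_{i < ⌊n x + 1⌋} a i`. The truncated floor
makes it vanish for `x < 0`. -/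
noncomputable def scaledPartialSum (β : ℝ) (a : ℕ → ℝ) (n : ℕ) (x : ℝ) : ℝ :=
  (n : ℝ) ^ (β - 1) * ∑ i ∈ Finset.range ⌊n * x + 1⌋₊, a i

/-- The rescaled coefficient `n ^ (β - 1) * d_{n,j}` at `j = -⌊n z⌋`, as a step function of `z`. -/
noncomputable def scaledCoef (β : ℝ) (a : ℕ → ℝ) (n : ℕ) (z : ℝ) : ℝ :=
  (n : ℝ) ^ (β - 1) * dCoef a n (-⌊n * z⌋)

/-- The Mandelbrot–Van Ness kernel `((1 + z)₊ ^ (1 - β) - z₊ ^ (1 - β)) / (1 - β)` of fractional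
Brownian motion with Hurst index `3 / 2 - β`: the pointwise limit of the rescaled coefficients. -/
noncomputable def mandelbrotVanNessKernel (β z : ℝ) : ℝ :=
  (max (1 + z) 0 ^ (1 - β) - max z 0 ^ (1 - β)) / (1 - β)

variable {β c : ℝ} {a : ℕ → ℝ}

theorem scaledCoef_eq_sub (β : ℝ) (a : ℕ → ℝ) (n : ℕ) (z : ℝ) :
    scaledCoef β a n z = scaledPartialSum β a n (1 + z) - scaledPartialSum β a n z := by
  have h_upper : ((n : ℤ) + 1 - -⌊n * z⌋).toNat = ⌊n * (1 + z) + 1⌋₊ := by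
    rw [← Int.floor_toNat, show (n : ℝ) * (1 + z) + 1 = n * z + (n + 1 : ℕ) by push_cast; ring,
      Int.floor_add_natCast]
    push_cast
    congr 1
    ring
  have h_lower : (1 - -⌊n * z⌋).toNat = ⌊n * z + 1⌋₊ := by
    rw [← Int.floor_toNat, Int.floor_add_one, sub_neg_eq_add, add_comm]
  rw [scaledCoef, dCoef_eq_sum_range_sub, h_upper, h_lower, mul_sub, scaledPartialSum,
    scaledPartialSum]

theorem measurable_scaledCoef (β : ℝ) (a : ℕ → ℝ) (n : ℕ) : Measurable (scaledCoef β a n) := by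
  have h_int : Measurable fun j : ℤ ↦ (n : ℝ) ^ (β - 1) * dCoef a n (-j) := measurable_from_top
  exact h_int.comp (Int.measurable_floor.comp (measurable_const_mul _))

theorem tendsto_scaledPartialSum_of_nonpos (hβ : β < 1) (a : ℕ → ℝ) {x : ℝ} (hx : x ≤ 0) :
    Tendsto (fun n ↦ scaledPartialSum β a n x) atTop (𝓝 0) := by
  have h_scale : Tendsto (fun n : ℕ ↦ (n : ℝ) ^ (β - 1)) atTop (𝓝 0) := by
    rw [← neg_sub 1 β]
    exact (tendsto_rpow_neg_atTop (sub_pos.2 hβ)).comp tendsto_natCast_atTop_atTop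
  refine squeeze_zero_norm (fun n ↦ ?_) (by simpa using h_scale.mul_const |a 0|)
  have h_floor : ⌊(n : ℝ) * x + 1⌋₊ ≤ 1 := by
    refine Nat.floor_le_one_of_le_one ?_
    linarith [mul_nonpos_of_nonneg_of_nonpos n.cast_nonneg hx]
  have h_sum : |∑ i ∈ Finset.range ⌊(n : ℝ) * x + 1⌋₊, a i| ≤ |a 0| := by
    interval_cases ⌊(n : ℝ) * x + 1⌋₊ <;> simp
  rw [scaledPartialSum, norm_mul, Real.norm_of_nonneg (Real.rpow_nonneg n.cast_nonneg _)]
  exact mul_le_mul_of_nonneg_left h_sum (Real.rpow_nonneg n.cast_nonneg _)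

theorem tendsto_natFloor_mul_add_one_div {x : ℝ} (hx : 0 ≤ x) :
    Tendsto (fun n : ℕ ↦ (⌊(n : ℝ) * x + 1⌋₊ : ℝ) / n) atTop (𝓝 x) := by
  have h := ((tendsto_nat_floor_mul_div_atTop hx).comp
    (tendsto_natCast_atTop_atTop (R := ℝ))).add tendsto_inv_atTop_nhds_zero_nat
  rw [add_zero] at h
  refine h.congr fun n ↦ ?_
  rw [Nat.floor_add_one (by positivity), mul_comm (n : ℝ) x, Nat.cast_succ, add_div, one_div,
    Function.comp_apply]

theorem tendsto_scaledPartialSum_of_pos (hβ : β < 1)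
    (ha : Tendsto (fun j : ℕ ↦ a j * (j : ℝ) ^ β) atTop (𝓝 c)) {x : ℝ} (hx : 0 < x) :
    Tendsto (fun n ↦ scaledPartialSum β a n x) atTop (𝓝 (c / (1 - β) * x ^ (1 - β))) := by
  have h_floor : Tendsto (fun n : ℕ ↦ ⌊(n : ℝ) * x + 1⌋₊) atTop atTop :=
    tendsto_nat_floor_atTop.comp <| tendsto_atTop_add_const_right _ _ <|
      tendsto_natCast_atTop_atTop.atTop_mul_const hx
  have h_index := (tendsto_natFloor_mul_add_one_div hx.le).rpow_const (p := 1 - β) (Or.inl hx.ne')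
  refine (((tendsto_sum_range_div_rpow hβ ha).comp h_floor).mul h_index).congr' ?_
  filter_upwards [eventually_gt_atTop 0] with n hn
  have hn' : (0 : ℝ) < n := Nat.cast_pos.2 hn
  have h_floor_pos : (0 : ℝ) < ⌊(n : ℝ) * x + 1⌋₊ := by
    rw [Nat.floor_add_one (by positivity)]
    positivity
  rw [Function.comp_apply, scaledPartialSum, Real.div_rpow h_floor_pos.le hn'.le,
    ← neg_sub 1 β, Real.rpow_neg hn'.le]
  field_simp

theorem tendsto_scaledPartialSum (hβ : β < 1)
    (ha : Tendsto (fun j : ℕ ↦ a j * (j : ℝ) ^ β) atTop (𝓝 c)) (x : ℝ) :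
    Tendsto (fun n ↦ scaledPartialSum β a n x) atTop
      (𝓝 (c / (1 - β) * max x 0 ^ (1 - β))) := by
  rcases le_or_gt x 0 with hx | hx
  · rw [max_eq_right hx, Real.zero_rpow (sub_pos.2 hβ).ne', mul_zero]
    exact tendsto_scaledPartialSum_of_nonpos hβ a hx
  · rw [max_eq_left hx.le]
    exact tendsto_scaledPartialSum_of_pos hβ ha hx

theorem tendsto_scaledCoef (hβ : β < 1)
    (ha : Tendsto (fun j : ℕ ↦ a j * (j : ℝ) ^ β) atTop (𝓝 c)) (z : ℝ) :
    Tendsto (fun n ↦ scaledCoef β a n z) atTop (𝓝 (c * mandelbrotVanNessKernel β z)) := by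
  simp only [scaledCoef_eq_sub]
  convert (tendsto_scaledPartialSum hβ ha (1 + z)).sub (tendsto_scaledPartialSum hβ ha z) using 2
  rw [mandelbrotVanNessKernel]
  ring

end Scaling

section Domination

variable {β c K : ℝ} {a : ℕ → ℝ} {n : ℕ}

theorem scaledCoef_of_lt_neg_one (β : ℝ) (a : ℕ → ℝ) (hn : 0 < n) {z : ℝ} (hz : z < -1) :
    scaledCoef β a n z = 0 := by
  have hn' : (1 : ℝ) ≤ n := Nat.one_le_cast.2 hn
  have h_upper : ⌊(n : ℝ) * (1 + z) + 1⌋₊ = 0 := Nat.floor_eq_zero.2 (by nlinarith)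
  have h_lower : ⌊(n : ℝ) * z + 1⌋₊ = 0 := Nat.floor_eq_zero.2 (by nlinarith)
  simp [scaledCoef_eq_sub, scaledPartialSum, h_upper, h_lower]

theorem abs_scaledPartialSum_le (hβ : β < 1) (hK : 0 ≤ K)
    (h_sum : ∀ m, 0 < m → |∑ i ∈ Finset.range m, a i| ≤ K * (m : ℝ) ^ (1 - β)) (hn : 0 < n)
    {x r : ℝ} (hr : 0 ≤ r) (hx : x ≤ r) :
    |scaledPartialSum β a n x| ≤ K * (r + 1) ^ (1 - β) := by
  have hn' : (1 : ℝ) ≤ n := Nat.one_le_cast.2 hn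
  have hn_pos : (0 : ℝ) < n := Nat.cast_pos.2 hn
  rw [scaledPartialSum, abs_mul, abs_of_nonneg (by positivity)]
  rcases Nat.eq_zero_or_pos ⌊(n : ℝ) * x + 1⌋₊ with h_zero | h_pos
  · rw [h_zero, Finset.sum_range_zero, abs_zero, mul_zero]
    positivity
  have h_floor : (⌊(n : ℝ) * x + 1⌋₊ : ℝ) ≤ n * (r + 1) :=
    (Nat.floor_le (Nat.pos_of_floor_pos h_pos).le).trans (by nlinarith)
  have h_cancel : (n : ℝ) ^ (β - 1) * (n : ℝ) ^ (1 - β) = 1 := by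
    rw [← Real.rpow_add hn_pos]
    simp
  calc (n : ℝ) ^ (β - 1) * |∑ i ∈ Finset.range ⌊(n : ℝ) * x + 1⌋₊, a i|
      ≤ (n : ℝ) ^ (β - 1) * (K * (⌊(n : ℝ) * x + 1⌋₊ : ℝ) ^ (1 - β)) := by
        gcongr
        exact h_sum _ h_pos
    _ ≤ (n : ℝ) ^ (β - 1) * (K * (n * (r + 1)) ^ (1 - β)) := by
        gcongr
    _ = K * (r + 1) ^ (1 - β) := by
        rw [Real.mul_rpow hn_pos.le (by positivity)]
        linear_combination K * (r + 1) ^ (1 - β) * h_cancel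

theorem abs_scaledCoef_le_of_le (hβ : β < 1) (hK : 0 ≤ K)
    (h_sum : ∀ m, 0 < m → |∑ i ∈ Finset.range m, a i| ≤ K * (m : ℝ) ^ (1 - β)) (hn : 0 < n)
    {z r : ℝ} (hr : 0 ≤ r) (hz : z ≤ r) :
    |scaledCoef β a n z| ≤ 2 * (K * (r + 2) ^ (1 - β)) := by
  have h_bound {x : ℝ} (hx : x ≤ r + 1) : |scaledPartialSum β a n x| ≤ K * (r + 2) ^ (1 - β) := by
    simpa only [add_assoc, one_add_one_eq_two] using
      abs_scaledPartialSum_le hβ hK h_sum hn (by linarith) hx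
  rw [scaledCoef_eq_sub, two_mul]
  exact (abs_sub _ _).trans (add_le_add (h_bound (by linarith)) (h_bound (by linarith)))

theorem abs_scaledCoef_le_of_pos (hβ : 0 ≤ β) (hK : 0 ≤ K)
    (ha : ∀ i, 0 < i → |a i| ≤ K * (i : ℝ) ^ (-β)) (hn : 0 < n) {z : ℝ} (hz : 0 < z) :
    |scaledCoef β a n z| ≤ K * z ^ (-β) := by
  have hn_pos : (0 : ℝ) < n := Nat.cast_pos.2 hn
  have h_cancel : (n : ℝ) ^ (β - 1) * n * (n : ℝ) ^ (-β) = 1 := by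
    rw [← Real.rpow_add_one hn_pos.ne', ← Real.rpow_add hn_pos]
    simp
  have h_coef : |dCoef a n (-⌊n * z⌋)| ≤ n * (K * (n * z) ^ (-β)) := by
    rw [← Int.natCast_floor_eq_floor (by positivity)]
    refine (abs_dCoef_neg_le hβ hK ha n _).trans ?_
    gcongr n * (K * ?_)
    exact Real.rpow_le_rpow_of_nonpos (by positivity) (Nat.lt_floor_add_one _).le (neg_nonpos.2 hβ)
  calc |scaledCoef β a n z| = (n : ℝ) ^ (β - 1) * |dCoef a n (-⌊n * z⌋)| := by
        rw [scaledCoef, abs_mul, abs_of_nonneg (by positivity)]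
    _ ≤ (n : ℝ) ^ (β - 1) * (n * (K * (n * z) ^ (-β))) := by gcongr
    _ = K * z ^ (-β) := by
        rw [Real.mul_rpow hn_pos.le hz.le]
        linear_combination K * z ^ (-β) * h_cancel

theorem exists_abs_scaledCoef_le (hβ0 : 0 ≤ β) (hβ : β < 1)
    (ha : Tendsto (fun j : ℕ ↦ a j * (j : ℝ) ^ β) atTop (𝓝 c)) :
    ∃ K, ∀ n z, |scaledCoef β a n z| ≤ K * (1 + |z|) ^ (-β) := by
  obtain ⟨K₁, hK₁, h_term⟩ := exists_abs_le_mul_rpow (u := a) (s := -β) (c := c) <| by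
    simpa only [Real.rpow_neg (Nat.cast_nonneg _), div_inv_eq_mul] using ha
  obtain ⟨K₂, hK₂, h_sum⟩ := exists_abs_le_mul_rpow (tendsto_sum_range_div_rpow hβ ha)
  set M : ℝ := 2 * (K₂ * (1 + 2) ^ (1 - β)) + K₁
  refine ⟨M * 2 ^ β, fun n z ↦ ?_⟩
  suffices h : |scaledCoef β a n z| ≤ M * ((1 + |z|) / 2) ^ (-β) by
    rwa [Real.div_rpow (by positivity) zero_le_two, Real.rpow_neg zero_le_two, div_inv_eq_mul,
      mul_comm (_ ^ _), ← mul_assoc] at h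
  have h_nonneg : 0 ≤ M * ((1 + |z|) / 2) ^ (-β) := by positivity
  rcases Nat.eq_zero_or_pos n with rfl | hn
  · simpa [scaledCoef, dCoef] using h_nonneg
  rcases lt_or_ge z (-1) with hz | hz
  · rwa [scaledCoef_of_lt_neg_one β a hn hz, abs_zero]
  rcases le_or_gt z 1 with hz' | hz'
  · have h_one : 1 ≤ ((1 + |z|) / 2) ^ (-β) :=
      Real.one_le_rpow_of_pos_of_le_one_of_nonpos (by positivity)
        (by linarith [abs_le.2 ⟨hz, hz'⟩]) (neg_nonpos.2 hβ0)
    calc |scaledCoef β a n z| ≤ 2 * (K₂ * (1 + 2) ^ (1 - β)) :=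
          abs_scaledCoef_le_of_le hβ hK₂ h_sum hn zero_le_one hz'
      _ ≤ M := le_add_of_nonneg_right hK₁
      _ ≤ M * ((1 + |z|) / 2) ^ (-β) := le_mul_of_one_le_right (by positivity) h_one
  · have hz_pos : 0 < z := one_pos.trans hz'
    calc |scaledCoef β a n z| ≤ K₁ * z ^ (-β) := abs_scaledCoef_le_of_pos hβ0 hK₁ h_term hn hz_pos
      _ ≤ M * z ^ (-β) := by
          gcongr
          exact le_add_of_nonneg_left (by positivity)
      _ ≤ M * ((1 + |z|) / 2) ^ (-β) := by
          gcongr M * ?_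
          refine Real.rpow_le_rpow_of_nonpos (by positivity) ?_ (neg_nonpos.2 hβ0)
          rw [abs_of_pos hz_pos]
          linarith

theorem exists_integrable_bound_scaledCoef_sq (hβ1 : 1 / 2 < β) (hβ2 : β < 1)
    (ha : Tendsto (fun j : ℕ ↦ a j * (j : ℝ) ^ β) atTop (𝓝 c)) :
    ∃ bound : ℝ → ℝ, Integrable bound ∧ ∀ n z, ‖scaledCoef β a n z ^ 2‖ ≤ bound z := by
  obtain ⟨K, hK⟩ := exists_abs_scaledCoef_le (by linarith) hβ2 ha
  refine ⟨fun z ↦ K ^ 2 * (1 + ‖z‖) ^ (-(2 * β)), ?_, fun n z ↦ ?_⟩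
  · refine (integrable_one_add_norm ?_).const_mul _
    rw [Module.finrank_self, Nat.cast_one]
    linarith
  · calc ‖scaledCoef β a n z ^ 2‖ = |scaledCoef β a n z| ^ 2 := by rw [norm_pow, Real.norm_eq_abs]
      _ ≤ (K * (1 + |z|) ^ (-β)) ^ 2 := by
          gcongr
          exact hK n z
      _ = K ^ 2 * (1 + ‖z‖) ^ (-(2 * β)) := by
          rw [mul_pow, ← Real.rpow_mul_natCast (by positivity), Real.norm_eq_abs]
          congr 2
          push_cast
          ring

theorem tendsto_integral_scaledCoef_sq (hβ1 : 1 / 2 < β) (hβ2 : β < 1)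
    (ha : Tendsto (fun j : ℕ ↦ a j * (j : ℝ) ^ β) atTop (𝓝 c)) :
    Tendsto (fun n ↦ ∫ z, scaledCoef β a n z ^ 2) atTop
      (𝓝 (c ^ 2 * ∫ z, mandelbrotVanNessKernel β z ^ 2)) := by
  obtain ⟨bound, h_int, h_bound⟩ := exists_integrable_bound_scaledCoef_sq hβ1 hβ2 ha
  rw [← MeasureTheory.integral_const_mul]
  simp only [← mul_pow]
  exact tendsto_integral_of_dominated_convergence bound
    (fun n ↦ ((measurable_scaledCoef β a n).pow_const 2).aestronglyMeasurable) h_int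
    (fun n ↦ Eventually.of_forall (h_bound n))
    (Eventually.of_forall fun z ↦ (tendsto_scaledCoef hβ2 ha z).pow 2)

theorem integrable_mandelbrotVanNessKernel_sq (hβ1 : 1 / 2 < β) (hβ2 : β < 1) :
    Integrable fun z ↦ mandelbrotVanNessKernel β z ^ 2 := by
  -- The kernel is the limit of the rescaled coefficients of the pure power filter.
  have h_power : Tendsto (fun j : ℕ ↦ (j : ℝ) ^ (-β) * (j : ℝ) ^ β) atTop (𝓝 1) := by
    refine tendsto_const_nhds.congr' ?_
    filter_upwards [eventually_gt_atTop 0] with j hj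
    rw [← Real.rpow_add (Nat.cast_pos.2 hj), neg_add_cancel, Real.rpow_zero]
  obtain ⟨bound, h_int, h_bound⟩ := exists_integrable_bound_scaledCoef_sq hβ1 hβ2 h_power
  refine ⟨?_, hasFiniteIntegral_of_dominated_convergence h_int.hasFiniteIntegral
    (fun n ↦ Eventually.of_forall (h_bound n)) (Eventually.of_forall fun z ↦ ?_)⟩
  · unfold mandelbrotVanNessKernel
    exact Measurable.aestronglyMeasurable (by fun_prop)
  · simpa only [one_mul] using (tendsto_scaledCoef hβ2 h_power z).pow 2

end Domination

section SumAsIntegral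

theorem measurePreserving_floor : MeasurePreserving (Int.floor : ℝ → ℤ) volume Measure.count := by
  refine ⟨Int.measurable_floor, Measure.ext_of_singleton fun j ↦ ?_⟩
  rw [Measure.map_apply Int.measurable_floor (measurableSet_singleton j),
    Int.preimage_floor_singleton, Real.volume_Ico, Measure.count_singleton]
  simp

theorem integral_comp_floor (f : ℤ → ℝ) : ∫ x : ℝ, f ⌊x⌋ = ∑' j, f j := by
  have h_count : ∫ x : ℝ, f ⌊x⌋ = ∫ j, f j ∂Measure.count := by
    rw [← measurePreserving_floor.map_eq]
    exact (integral_map measurePreserving_floor.measurable.aemeasurable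
      measurable_from_top.aestronglyMeasurable).symm
  rw [h_count]
  by_cases hf : Integrable f Measure.count
  · simp [integral_countable hf, measureReal_def]
  · rw [integral_undef hf, tsum_eq_zero_of_not_summable]
    rwa [integrable_count_iff, summable_norm_iff] at hf

theorem integral_scaledCoef_sq (β : ℝ) (a : ℕ → ℝ) {n : ℕ} (hn : 0 < n) :
    ∫ z, scaledCoef β a n z ^ 2 = (∑' j, dCoef a n j ^ 2) / (n : ℝ) ^ (3 - 2 * β) := by
  have hn_pos : (0 : ℝ) < n := Nat.cast_pos.2 hn
  have h_scale : ((n : ℝ) ^ (β - 1)) ^ 2 * (n : ℝ)⁻¹ = ((n : ℝ) ^ (3 - 2 * β))⁻¹ := by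
    rw [← Real.rpow_mul_natCast hn_pos.le, ← Real.rpow_neg_one, ← Real.rpow_add hn_pos,
      ← Real.rpow_neg hn_pos.le]
    congr 1
    push_cast
    ring
  calc ∫ z, scaledCoef β a n z ^ 2
      = ((n : ℝ) ^ (β - 1)) ^ 2 * ∫ z : ℝ, dCoef a n (-⌊n * z⌋) ^ 2 := by
        simp only [scaledCoef, mul_pow, MeasureTheory.integral_const_mul]
    _ = ((n : ℝ) ^ (β - 1)) ^ 2 * ((n : ℝ)⁻¹ * ∫ x : ℝ, dCoef a n (-⌊x⌋) ^ 2) := by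
        rw [Measure.integral_comp_mul_left (fun x : ℝ ↦ dCoef a n (-⌊x⌋) ^ 2),
          abs_of_pos (inv_pos.2 hn_pos), smul_eq_mul]
    _ = ((n : ℝ) ^ (β - 1)) ^ 2 * ((n : ℝ)⁻¹ * ∑' j, dCoef a n j ^ 2) := by
        rw [integral_comp_floor fun j ↦ dCoef a n (-j) ^ 2,
          tsum_comp_neg fun j ↦ dCoef a n j ^ 2]
    _ = (∑' j, dCoef a n j ^ 2) / (n : ℝ) ^ (3 - 2 * β) := by
        rw [← mul_assoc, h_scale, inv_mul_eq_div]

end SumAsIntegral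

section LimitConstant

variable {β : ℝ}

/-- The constant `C` in the asymptotics of `∑ d_{n,j} ^ 2`, which is also the squared `L²` norm of
the Mandelbrot–Van Ness kernel. -/
noncomputable def varianceConst (β : ℝ) : ℝ :=
  (∫ z in Set.Ioi (0 : ℝ), (∫ u in (0 : ℝ)..1, (u + z) ^ (-β)) ^ 2) +
    ∫ z in (0 : ℝ)..1, (∫ u in (0 : ℝ)..(1 - z), u ^ (-β)) ^ 2

theorem integral_rpow_neg (hβ : β < 1) (x y : ℝ) :
    ∫ u in x..y, u ^ (-β) = (y ^ (1 - β) - x ^ (1 - β)) / (1 - β) := by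
  rw [integral_rpow (Or.inl (by linarith)), neg_add_eq_sub]

theorem varianceConst_pos (hβ : β < 1) : 0 < varianceConst β := by
  have hs : 0 < 1 - β := sub_pos.2 hβ
  refine add_pos_of_nonneg_of_pos (integral_nonneg fun z ↦ sq_nonneg _) ?_
  simp only [integral_rpow_neg hβ, Real.zero_rpow hs.ne', sub_zero]
  refine intervalIntegral_pos_of_pos_on ?_ (fun z hz ↦ ?_) one_pos
  · refine Continuous.intervalIntegrable ?_ _ _
    exact (((continuous_const.sub continuous_id).rpow_const fun _ ↦ Or.inr hs.le).div_const _).pow 2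
  · have hz' : 0 < 1 - z := sub_pos.2 hz.2
    positivity

theorem mandelbrotVanNessKernel_of_nonneg (hβ : β < 1) {z : ℝ} (hz : 0 ≤ z) :
    mandelbrotVanNessKernel β z = ∫ u in (0 : ℝ)..1, (u + z) ^ (-β) := by
  rw [integral_comp_add_right fun x ↦ x ^ (-β), integral_rpow_neg hβ, zero_add,
    mandelbrotVanNessKernel, max_eq_left hz, max_eq_left (by linarith)]

theorem mandelbrotVanNessKernel_neg_of_mem_Icc (hβ : β < 1) {z : ℝ} (hz : z ∈ Set.Icc 0 1) :
    mandelbrotVanNessKernel β (-z) = ∫ u in (0 : ℝ)..(1 - z), u ^ (-β) := by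
  rw [integral_rpow_neg hβ, mandelbrotVanNessKernel, max_eq_right (neg_nonpos.2 hz.1),
    ← sub_eq_add_neg, max_eq_left (sub_nonneg.2 hz.2)]

theorem mandelbrotVanNessKernel_of_le_neg_one {z : ℝ} (hz : z ≤ -1) :
    mandelbrotVanNessKernel β z = 0 := by
  rw [mandelbrotVanNessKernel, max_eq_right (by linarith), max_eq_right (by linarith), sub_self,
    zero_div]

theorem integral_mandelbrotVanNessKernel_sq (hβ1 : 1 / 2 < β) (hβ2 : β < 1) :
    ∫ z, mandelbrotVanNessKernel β z ^ 2 = varianceConst β := by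
  have h_int := integrable_mandelbrotVanNessKernel_sq hβ1 hβ2
  have h_Ioi : ∫ z in Set.Ioi 0, mandelbrotVanNessKernel β z ^ 2 =
      ∫ z in Set.Ioi (0 : ℝ), (∫ u in (0 : ℝ)..1, (u + z) ^ (-β)) ^ 2 :=
    setIntegral_congr_fun measurableSet_Ioi fun z hz ↦ by
      rw [mandelbrotVanNessKernel_of_nonneg hβ2 (le_of_lt hz)]
  have h_Iic : ∫ z in Set.Iic 0, mandelbrotVanNessKernel β z ^ 2 =
      ∫ z in (0 : ℝ)..1, (∫ u in (0 : ℝ)..(1 - z), u ^ (-β)) ^ 2 :=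
    calc ∫ z in Set.Iic 0, mandelbrotVanNessKernel β z ^ 2
        = ∫ z in Set.Ioc (-1) 0, mandelbrotVanNessKernel β z ^ 2 := by
          refine setIntegral_eq_of_subset_of_forall_sdiff_eq_zero measurableSet_Iic
            Set.Ioc_subset_Iic_self fun z hz ↦ ?_
          have hz' : z ≤ -1 := not_lt.1 fun h ↦ hz.2 ⟨h, hz.1⟩
          rw [mandelbrotVanNessKernel_of_le_neg_one hz', zero_pow two_ne_zero]
      _ = ∫ z in (0 : ℝ)..1, mandelbrotVanNessKernel β (-z) ^ 2 := by
          rw [integral_comp_neg fun z ↦ mandelbrotVanNessKernel β z ^ 2, neg_zero,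
            integral_of_le (by norm_num)]
      _ = ∫ z in (0 : ℝ)..1, (∫ u in (0 : ℝ)..(1 - z), u ^ (-β)) ^ 2 := by
          refine integral_congr fun z hz ↦ ?_
          rw [Set.uIcc_of_le zero_le_one] at hz
          simp only [mandelbrotVanNessKernel_neg_of_mem_Icc hβ2 hz]
  rw [← integral_Iic_add_Ioi h_int.integrableOn h_int.integrableOn, h_Iic, h_Ioi, varianceConst,
    add_comm]

end LimitConstant

theorem dCoef_sq_sum_asymp_general {β c : ℝ} (hβ1 : 1 / 2 < β) (hβ2 : β < 1) {a : ℕ → ℝ}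
    (ha : Tendsto (fun j : ℕ ↦ a j * (j : ℝ) ^ β) atTop (𝓝 c)) :
    Tendsto (fun n : ℕ ↦ (∑' j : ℤ, dCoef a n j ^ 2) / (varianceConst β * (n : ℝ) ^ (3 - 2 * β)))
      atTop (𝓝 (c ^ 2)) := by
  have h_lim := (tendsto_integral_scaledCoef_sq hβ1 hβ2 ha).div_const (varianceConst β)
  rw [integral_mandelbrotVanNessKernel_sq hβ1 hβ2,
    mul_div_cancel_right₀ _ (varianceConst_pos hβ2).ne'] at h_lim
  refine h_lim.congr' ?_
  filter_upwards [eventually_gt_atTop 0] with n hn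
  rw [integral_scaledCoef_sq β a hn, div_div, mul_comm]

/-- If `a_j ~ j^(-β)` with `1/2 < β < 1`, then
`∑_{j ≤ n} d_{n,j}^2 ~ C n^(3-2β)` with
`C = ∫_0^∞ (∫_0^1 (u+z)^(-β) du)^2 dz + ∫_0^1 (∫_0^{1-z} u^(-β) du)^2 dz`. -/
theorem dCoef_sq_sum_asymp (β : ℝ) (hβ1 : 1 / 2 < β) (hβ2 : β < 1) (a : ℕ → ℝ)
    (ha : Tendsto (fun j : ℕ => a j * (j : ℝ) ^ β) atTop (nhds 1)) :
    Tendsto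
      (fun n : ℕ =>
        (∑' j : ℤ, (dCoef a n j) ^ 2) /
          (((∫ z in Set.Ioi (0:ℝ), (∫ u in (0:ℝ)..1, (u + z) ^ (-β)) ^ 2) +
              ∫ z in (0:ℝ)..1, (∫ u in (0:ℝ)..(1 - z), u ^ (-β)) ^ 2) *
            (n : ℝ) ^ (3 - 2 * β)))
      atTop (nhds 1) := by
  simpa only [varianceConst, one_pow] using dCoef_sq_sum_asymp_general hβ1 hβ2 ha
end

section
/- Let ξ be a random variable with density f_{b_n} (tapered Pareto with parameters α∈(0,2) and b_n=n^γ), centered at its mean, and let d_{n,j} be coefficients with max_j |d_{n,j}| / (∑_j d_{n,j}^2)^{1/2} ≤ C n^{-1/2}. If γ < 1/α, then the Lyapunov ratio L(3,n) = (∑_j |d_{n,j}|^3 / (∑_j d_{n,j}^2)^{3/2}) · (E|ξ|^3 / (E ξ^2)^{3/2}) tends to 0 as n→∞. -/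
open MeasureTheory ProbabilityTheory Filter

/-- The tapered Pareto density. -/
noncomputable def taperedParetoDensity (α b x : ℝ) : ℝ :=
  if x < 1 then 0
  else if x ≤ b then α * x ^ (-α - 1)
  else b ^ (-α) * Real.exp (b - x)

open scoped Topology

/-!
Since `∑ |d_j|^p ≤ (max |d_j|)^(p-2) ∑ d_j^2`, the coefficients contribute at most `c ^ (p - 2)`,
where `c = max |d_j| / ‖d‖₂`. For the tapered Pareto law the `p`-th moment is at most of order
`b ^ (p - α)`, while the variance is at least of order `b ^ (2 - α)`: mass of order `b ^ (-α)` is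
spread over a window of length of order `b`, so that no centering can make the second moment
smaller. Hence the standardized `p`-th moment is `O((b ^ (α/2)) ^ (p - 2))`, and the Lyapunov ratio
is `O((c * b ^ (α/2)) ^ (p - 2))`. With `p = 3`, `c = C n ^ (-1/2)` and `b = n ^ γ` this is
`O(n ^ ((γ α - 1) / 2))`.
-/

section Coefficients

variable {ι : Type*} {p : ℝ} {d : ι → ℝ}

/-- The factor `‖d‖_p ^ p / ‖d‖₂ ^ p` contributed by the coefficients `d` to the Lyapunov ratio of
order `p`; for `p ≠ 0` division by zero gives it the value `0` at `d = 0`. -/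
noncomputable def coeffLyapunovRatio (p : ℝ) (d : ι → ℝ) : ℝ :=
  (∑' j, |d j| ^ p) / (∑' j, d j ^ 2) ^ (p / 2)

lemma coeffLyapunovRatio_nonneg (p : ℝ) (d : ι → ℝ) : 0 ≤ coeffLyapunovRatio p d :=
  div_nonneg (tsum_nonneg fun _ => by positivity)
    (Real.rpow_nonneg (tsum_nonneg fun _ => by positivity) _)

lemma tsum_abs_rpow_le_mul_tsum_sq {M : ℝ} (hp : 2 ≤ p) (hd : Summable fun j => d j ^ 2)
    (hM : ∀ j, |d j| ≤ M) : ∑' j, |d j| ^ p ≤ M ^ (p - 2) * ∑' j, d j ^ 2 := by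
  have hle (j : ι) : |d j| ^ p ≤ M ^ (p - 2) * d j ^ 2 :=
    calc |d j| ^ p = |d j| ^ (p - 2) * |d j| ^ (2 : ℝ) := by
          rw [← Real.rpow_add_of_nonneg (abs_nonneg _) (by linarith) zero_le_two, sub_add_cancel]
      _ = |d j| ^ (p - 2) * d j ^ 2 := by rw [Real.rpow_two, sq_abs]
      _ ≤ M ^ (p - 2) * d j ^ 2 := by
          gcongr
          exact hM j
  have hsum : Summable fun j => M ^ (p - 2) * d j ^ 2 := hd.mul_left _
  rw [← tsum_mul_left]
  exact (hsum.of_nonneg_of_le (fun _ => by positivity) hle).tsum_le_tsum hle hsum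

lemma coeffLyapunovRatio_le {c : ℝ} (hp : 2 ≤ p) (hc : 0 ≤ c) (hd : Summable fun j => d j ^ 2)
    (hdc : ∀ j, |d j| ≤ c * √(∑' j, d j ^ 2)) : coeffLyapunovRatio p d ≤ c ^ (p - 2) := by
  have hsum := tsum_abs_rpow_le_mul_tsum_sq hp hd hdc
  rw [coeffLyapunovRatio]
  set S := ∑' j, d j ^ 2
  have hS : 0 ≤ S := tsum_nonneg fun _ => sq_nonneg _
  have hpow : √S ^ (p - 2) * S = S ^ (p / 2) := by
    rcases hS.eq_or_lt with hS | hS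
    · rw [← hS, mul_zero, Real.zero_rpow (by linarith)]
    · rw [Real.sqrt_eq_rpow, ← Real.rpow_mul hS.le, ← Real.rpow_add_one hS.ne']
      ring_nf
  refine div_le_of_le_mul₀ (by positivity) (by positivity) (hsum.trans_eq ?_)
  rw [Real.mul_rpow hc (Real.sqrt_nonneg S), mul_assoc, hpow]

end Coefficients

section Moments

variable {Ω : Type*} {mΩ : MeasurableSpace Ω} {P : Measure Ω} {X : Ω → ℝ} {p : ℝ}

/-- The standardized absolute moment `E|ξ|^p / (E ξ²)^(p/2)` of order `p`, where `ξ = X - E X`. -/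
noncomputable def standardizedAbsMoment (p : ℝ) (X : Ω → ℝ) (P : Measure Ω) : ℝ :=
  (∫ ω, |X ω - P[X]| ^ p ∂P) / Var[X; P] ^ (p / 2)

lemma standardizedAbsMoment_nonneg (p : ℝ) (X : Ω → ℝ) (P : Measure Ω) :
    0 ≤ standardizedAbsMoment p X P :=
  div_nonneg (integral_nonneg fun _ => by positivity) (Real.rpow_nonneg (variance_nonneg X P) _)

lemma abs_sub_rpow_le_add {x y : ℝ} (hp : 0 ≤ p) (hx : 0 ≤ x) (hy : 0 ≤ y) :
    |x - y| ^ p ≤ x ^ p + y ^ p := by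
  have hmax : |x - y| ≤ max x y := by
    rw [abs_sub_le_iff]
    constructor <;> linarith [le_max_left x y, le_max_right x y]
  calc |x - y| ^ p ≤ max x y ^ p := Real.rpow_le_rpow (abs_nonneg _) hmax hp
    _ ≤ x ^ p + y ^ p := by
      rcases max_choice x y with h | h <;> rw [h] <;>
        linarith [Real.rpow_nonneg hx p, Real.rpow_nonneg hy p]

lemma integral_abs_sub_integral_rpow_le [IsProbabilityMeasure P] (hp : 1 ≤ p)
    (hX : ∀ᵐ ω ∂P, 0 ≤ X ω) (hint : Integrable X P) (hintp : Integrable (fun ω => X ω ^ p) P) :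
    ∫ ω, |X ω - P[X]| ^ p ∂P ≤ 2 * ∫ ω, X ω ^ p ∂P := by
  have hp0 : 0 ≤ p := zero_le_one.trans hp
  have hmean : 0 ≤ P[X] := integral_nonneg_of_ae hX
  have hjensen : P[X] ^ p ≤ ∫ ω, X ω ^ p ∂P :=
    (convexOn_rpow hp).map_integral_le (Real.continuous_rpow_const hp0).continuousOn isClosed_Ici
      hX hint hintp
  calc ∫ ω, |X ω - P[X]| ^ p ∂P ≤ ∫ ω, (X ω ^ p + P[X] ^ p) ∂P :=
        integral_mono_of_nonneg (ae_of_all _ fun _ => by positivity)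
          (hintp.add (integrable_const _)) (hX.mono fun _ hω => abs_sub_rpow_le_add hp0 hω hmean)
    _ = (∫ ω, X ω ^ p ∂P) + P[X] ^ p := by
        rw [integral_add hintp (integrable_const _), integral_const, probReal_univ, one_smul]
    _ ≤ 2 * ∫ ω, X ω ^ p ∂P := by linarith

end Moments

section SecondMoment

variable {u v : ℝ}

lemma cube_div_twelve_le_integral_sq_sub (huv : u ≤ v) (m : ℝ) :
    (v - u) ^ 3 / 12 ≤ ∫ x in u..v, (x - m) ^ 2 := by
  have hint : ∫ x in u..v, (x - m) ^ 2 = ((v - m) ^ 3 - (u - m) ^ 3) / 3 := by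
    rw [intervalIntegral.integral_comp_sub_right (fun x => x ^ 2) m, integral_pow]
    norm_num
  rw [hint]
  linarith [mul_nonneg (sub_nonneg.2 huv) (sq_nonneg (u + v - 2 * m))]

lemma mul_cube_div_twelve_le_integral_mul_sq_sub {f : ℝ → ℝ} {c m : ℝ} (huv : u ≤ v) (hc : 0 ≤ c)
    (hf : ∀ x, 0 ≤ f x) (hcf : ∀ x ∈ Set.Ioc u v, c ≤ f x)
    (hint : Integrable fun x => f x * (x - m) ^ 2) :
    c * ((v - u) ^ 3 / 12) ≤ ∫ x, f x * (x - m) ^ 2 := by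
  have hintc : IntegrableOn (fun x => c * (x - m) ^ 2) (Set.Ioc u v) :=
    Continuous.integrableOn_Ioc (by fun_prop)
  calc c * ((v - u) ^ 3 / 12) ≤ c * ∫ x in u..v, (x - m) ^ 2 := by
        gcongr
        exact cube_div_twelve_le_integral_sq_sub huv m
    _ = ∫ x in Set.Ioc u v, c * (x - m) ^ 2 := by
        rw [intervalIntegral.integral_of_le huv, integral_const_mul]
    _ ≤ ∫ x in Set.Ioc u v, f x * (x - m) ^ 2 :=
        setIntegral_mono_on hintc hint.integrableOn measurableSet_Ioc fun x hx => by
          gcongr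
          exact hcf x hx
    _ ≤ ∫ x, f x * (x - m) ^ 2 :=
        setIntegral_le_integral hint (ae_of_all _ fun x => mul_nonneg (hf x) (sq_nonneg _))

end SecondMoment

section Density

variable {α b p : ℝ}

lemma measurable_taperedParetoDensity (α b : ℝ) : Measurable (taperedParetoDensity α b) :=
  Measurable.ite measurableSet_Iio measurable_const
    (Measurable.ite measurableSet_Iic (by fun_prop) (by fun_prop))

lemma taperedParetoDensity_nonneg (hα : 0 ≤ α) (hb : 0 ≤ b) (x : ℝ) :
    0 ≤ taperedParetoDensity α b x := by
  unfold taperedParetoDensity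
  split_ifs with hx1 hxb
  · exact le_rfl
  · have : 0 ≤ x := by linarith
    positivity
  · positivity

-- The window reaches beyond `b` so that it has length `b / 2` even as `[1, b]` shrinks to a point.
lemma le_taperedParetoDensity (hα0 : 0 ≤ α) (hα2 : α ≤ 2) (hb : 1 ≤ b) {x : ℝ}
    (hx : x ∈ Set.Ioc ((b + 1) / 2) (b + 1 / 2)) :
    α / 4 * b ^ (-α - 1) ≤ taperedParetoDensity α b x := by
  obtain ⟨hx_lower, hx_upper⟩ := hx
  have : 0 < b := by linarith
  rw [taperedParetoDensity, if_neg (by linarith)]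
  split_ifs with hxb
  · have hx0 : 0 < x := by linarith
    calc α / 4 * b ^ (-α - 1) ≤ α * b ^ (-α - 1) := by
          gcongr
          linarith
      _ ≤ α * x ^ (-α - 1) := by
          gcongr ?_ * ?_
          exact Real.rpow_le_rpow_of_nonpos hx0 hxb (by linarith)
  · calc α / 4 * b ^ (-α - 1) ≤ 1 / 2 * b ^ (-α) := by
          gcongr ?_ * ?_
          · linarith
          · exact Real.rpow_le_rpow_of_exponent_le hb (by linarith)
      _ = b ^ (-α) * (1 / 2) := mul_comm _ _
      _ ≤ b ^ (-α) * Real.exp (b - x) := by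
          gcongr
          linarith [Real.add_one_le_exp (b - x)]

/-- An integrable majorant of `x ↦ taperedParetoDensity α b x * x ^ p`. On `[1, b]` it keeps the
power law; the exponential tail is replaced by a multiple of the integrand of `Γ(p + 1)`, shifted
to start at `b - 1`. -/
noncomputable def taperedParetoMajorant (α b p x : ℝ) : ℝ :=
  (Set.Icc 1 b).indicator (fun x => α * x ^ (p - α - 1)) x +
    Real.exp 1 * b ^ (p - α) * (Set.Ioi 0).indicator (fun u => Real.exp (-u) * u ^ p) (x - (b - 1))

lemma exp_mul_rpow_le {x : ℝ} (hp : 0 ≤ p) (hb : 1 ≤ b) (hx : b ≤ x) :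
    Real.exp (b - x) * x ^ p ≤
      Real.exp 1 * b ^ p * (Real.exp (-(x - (b - 1))) * (x - (b - 1)) ^ p) := by
  have hu : 0 ≤ x - (b - 1) := by linarith
  have hx0 : 0 ≤ x := by linarith
  have hscale : x ≤ b * (x - (b - 1)) := by
    linarith [mul_nonneg (sub_nonneg.2 hb) (sub_nonneg.2 hx)]
  calc Real.exp (b - x) * x ^ p ≤ Real.exp (b - x) * (b * (x - (b - 1))) ^ p := by
        gcongr
    _ = Real.exp 1 * b ^ p * (Real.exp (-(x - (b - 1))) * (x - (b - 1)) ^ p) := by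
        rw [Real.mul_rpow (by linarith) hu, show b - x = 1 + -(x - (b - 1)) by ring, Real.exp_add]
        ring

lemma taperedParetoDensity_mul_rpow_le_majorant (hα : 0 ≤ α) (hp : 0 ≤ p) (hb : 1 ≤ b) (x : ℝ) :
    taperedParetoDensity α b x * x ^ p ≤ taperedParetoMajorant α b p x := by
  have hb0 : 0 < b := by linarith
  have hbody : 0 ≤ (Set.Icc 1 b).indicator (fun x => α * x ^ (p - α - 1)) x :=
    Set.indicator_nonneg (fun y hy => mul_nonneg hα (Real.rpow_nonneg (by linarith [hy.1]) _)) x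
  have htail : 0 ≤ (Set.Ioi 0).indicator (fun u => Real.exp (-u) * u ^ p) (x - (b - 1)) :=
    Set.indicator_nonneg (fun y hy => by have : 0 < y := hy; positivity) _
  unfold taperedParetoDensity taperedParetoMajorant
  split_ifs with hx1 hxb
  · rw [zero_mul]
    positivity
  · have hx0 : 0 < x := by linarith
    rw [Set.indicator_of_mem (show x ∈ Set.Icc 1 b from ⟨not_lt.1 hx1, hxb⟩), mul_assoc,
      ← Real.rpow_add hx0, show -α - 1 + p = p - α - 1 by ring]
    exact le_add_of_nonneg_right (by positivity)
  · rw [Set.indicator_of_mem (show x - (b - 1) ∈ Set.Ioi 0 from Set.mem_Ioi.2 (by linarith))]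
    refine le_add_of_nonneg_of_le hbody ?_
    rw [mul_assoc, show p - α = -α + p by ring, Real.rpow_add hb0]
    calc b ^ (-α) * (Real.exp (b - x) * x ^ p)
        ≤ b ^ (-α) * (Real.exp 1 * b ^ p * (Real.exp (-(x - (b - 1))) * (x - (b - 1)) ^ p)) :=
          mul_le_mul_of_nonneg_left (exp_mul_rpow_le hp hb (not_le.1 hxb).le) (by positivity)
      _ = _ := by ring

lemma integrableOn_exp_neg_mul_rpow (hp : -1 < p) :
    IntegrableOn (fun u : ℝ => Real.exp (-u) * u ^ p) (Set.Ioi 0) := by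
  simpa only [add_sub_cancel_right] using
    Real.GammaIntegral_convergent (s := p + 1) (by linarith)

lemma integrableOn_Icc_one_rpow (b q : ℝ) : IntegrableOn (fun x : ℝ => x ^ q) (Set.Icc 1 b) :=
  ContinuousOn.integrableOn_Icc fun _ hx =>
    (Real.continuousAt_rpow_const _ _ (Or.inl (by linarith [hx.1]))).continuousWithinAt

lemma integrable_indicator_Icc_rpow (α b q : ℝ) :
    Integrable ((Set.Icc 1 b).indicator fun x : ℝ => α * x ^ q) :=
  (integrable_indicator_iff measurableSet_Icc).2 ((integrableOn_Icc_one_rpow b q).const_mul α)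

lemma integrable_indicator_exp_neg_mul_rpow_comp_sub (hp : -1 < p) (a : ℝ) :
    Integrable fun x : ℝ =>
      (Set.Ioi 0).indicator (fun u : ℝ => Real.exp (-u) * u ^ p) (x - a) :=
  ((integrable_indicator_iff measurableSet_Ioi).2 (integrableOn_exp_neg_mul_rpow hp)).comp_sub_right
    a

lemma integrable_taperedParetoMajorant (α b : ℝ) (hp : -1 < p) :
    Integrable (taperedParetoMajorant α b p) :=
  (integrable_indicator_Icc_rpow α b _).add
    ((integrable_indicator_exp_neg_mul_rpow_comp_sub hp (b - 1)).const_mul _)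

/-- The constant `K` in the moment bound `E ζ ^ p ≤ K * b ^ (p - α)` for the tapered Pareto law;
it is meant for `p > α`. -/
noncomputable def taperedParetoMomentConst (α p : ℝ) : ℝ :=
  α / (p - α) + Real.exp 1 * Real.Gamma (p + 1)

lemma integral_taperedParetoMajorant_le (hα : 0 ≤ α) (hαp : α < p) (hb : 1 ≤ b) :
    ∫ x, taperedParetoMajorant α b p x ≤ taperedParetoMomentConst α p * b ^ (p - α) := by
  have hp : -1 < p := by linarith
  have body : ∫ x, (Set.Icc 1 b).indicator (fun x => α * x ^ (p - α - 1)) x =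
      α / (p - α) * (b ^ (p - α) - 1) := by
    rw [integral_indicator measurableSet_Icc, integral_Icc_eq_integral_Ioc, integral_const_mul,
      ← intervalIntegral.integral_of_le hb, integral_rpow (Or.inl (by linarith)), sub_add_cancel,
      Real.one_rpow]
    ring
  have tail : ∫ x, (Set.Ioi 0).indicator (fun u => Real.exp (-u) * u ^ p) (x - (b - 1)) =
      Real.Gamma (p + 1) := by
    rw [integral_sub_right_eq_self, integral_indicator measurableSet_Ioi,
      Real.Gamma_eq_integral (by linarith), add_sub_cancel_right]
  have hcoef : 0 ≤ α / (p - α) := div_nonneg hα (sub_nonneg.2 hαp.le)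
  unfold taperedParetoMajorant taperedParetoMomentConst
  rw [integral_add (integrable_indicator_Icc_rpow α b _)
      ((integrable_indicator_exp_neg_mul_rpow_comp_sub hp (b - 1)).const_mul _),
    integral_const_mul, body, tail]
  linarith

end Density

section Law

variable {α b p : ℝ}

/-- The tapered Pareto law, as a measure on the real line. -/
noncomputable def taperedPareto (α b : ℝ) : Measure ℝ :=
  volume.withDensity fun x => ENNReal.ofReal (taperedParetoDensity α b x)

lemma integrable_taperedPareto_iff (hα : 0 ≤ α) (hb : 0 ≤ b) {g : ℝ → ℝ} :
    Integrable g (taperedPareto α b) ↔ Integrable fun x => taperedParetoDensity α b x * g x := by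
  rw [taperedPareto, integrable_withDensity_iff_integrable_smul'
    (measurable_taperedParetoDensity α b).ennreal_ofReal
    (ae_of_all _ fun _ => ENNReal.ofReal_lt_top)]
  simp only [ENNReal.toReal_ofReal (taperedParetoDensity_nonneg hα hb _), smul_eq_mul]

lemma integral_taperedPareto (hα : 0 ≤ α) (hb : 0 ≤ b) (g : ℝ → ℝ) :
    ∫ x, g x ∂taperedPareto α b = ∫ x, taperedParetoDensity α b x * g x := by
  rw [taperedPareto, integral_withDensity_eq_integral_toReal_smul
    (measurable_taperedParetoDensity α b).ennreal_ofReal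
    (ae_of_all _ fun _ => ENNReal.ofReal_lt_top)]
  simp only [ENNReal.toReal_ofReal (taperedParetoDensity_nonneg hα hb _), smul_eq_mul]

lemma ae_taperedPareto_one_le (α b : ℝ) : ∀ᵐ x ∂taperedPareto α b, 1 ≤ x := by
  rw [taperedPareto, ae_withDensity_iff (measurable_taperedParetoDensity α b).ennreal_ofReal]
  refine ae_of_all _ fun x hx => not_lt.1 fun hx1 => hx ?_
  rw [taperedParetoDensity, if_pos hx1, ENNReal.ofReal_zero]

lemma integrable_rpow_taperedPareto (hα : 0 ≤ α) (hp : 0 ≤ p) (hb : 1 ≤ b) :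
    Integrable (fun x => x ^ p) (taperedPareto α b) := by
  have hb0 : 0 ≤ b := by linarith
  rw [integrable_taperedPareto_iff hα hb0]
  refine (integrable_taperedParetoMajorant α b (by linarith : -1 < p)).mono'
    ((measurable_taperedParetoDensity α b).mul (by fun_prop)).aestronglyMeasurable
    (ae_of_all _ fun x => ?_)
  rw [Real.norm_of_nonneg]
  · exact taperedParetoDensity_mul_rpow_le_majorant hα hp hb x
  · by_cases hx : x < 1
    · rw [taperedParetoDensity, if_pos hx, zero_mul]
    · exact mul_nonneg (taperedParetoDensity_nonneg hα hb0 x) (Real.rpow_nonneg (by linarith) p)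

lemma integral_rpow_taperedPareto_le (hα : 0 ≤ α) (hαp : α < p) (hb : 1 ≤ b) :
    ∫ x, x ^ p ∂taperedPareto α b ≤ taperedParetoMomentConst α p * b ^ (p - α) := by
  have hb0 : 0 ≤ b := by linarith
  have hp : 0 ≤ p := by linarith
  rw [integral_taperedPareto hα hb0]
  exact (integral_mono
    ((integrable_taperedPareto_iff hα hb0).1 (integrable_rpow_taperedPareto hα hp hb))
    (integrable_taperedParetoMajorant α b (by linarith))
    (taperedParetoDensity_mul_rpow_le_majorant hα hp hb)).trans
    (integral_taperedParetoMajorant_le hα hαp hb)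

lemma integrable_sq_sub_taperedPareto (hα : 0 ≤ α) (hb : 1 ≤ b) (m : ℝ) :
    Integrable (fun x => (x - m) ^ 2) (taperedPareto α b) := by
  have h0 := integrable_rpow_taperedPareto hα le_rfl hb
  have h1 := integrable_rpow_taperedPareto hα zero_le_one hb
  have h2 := integrable_rpow_taperedPareto hα zero_le_two hb
  refine ((h2.sub (h1.const_mul (2 * m))).add (h0.const_mul (m ^ 2))).congr
    (ae_of_all _ fun x => ?_)
  simp only [Pi.add_apply, Pi.sub_apply, Real.rpow_zero, Real.rpow_one, Real.rpow_two]
  ring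

lemma le_variance_taperedPareto (hα0 : 0 ≤ α) (hα2 : α ≤ 2) (hb : 1 ≤ b) :
    α / 384 * b ^ (2 - α) ≤ Var[id; taperedPareto α b] := by
  have hb0 : 0 < b := by linarith
  have hpow : b ^ (2 - α) = b ^ (-α - 1) * b ^ 3 := by
    rw [show 2 - α = -α - 1 + (3 : ℕ) by push_cast; ring, Real.rpow_add_natCast hb0.ne']
  rw [variance_eq_integral aemeasurable_id, integral_taperedPareto hα0 hb0.le]
  calc α / 384 * b ^ (2 - α)
      = α / 4 * b ^ (-α - 1) * ((b + 1 / 2 - (b + 1) / 2) ^ 3 / 12) := by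
        rw [hpow]
        ring
    _ ≤ _ := mul_cube_div_twelve_le_integral_mul_sq_sub (by linarith) (by positivity)
        (taperedParetoDensity_nonneg hα0 hb0.le) (fun _ => le_taperedParetoDensity hα0 hα2 hb)
        ((integrable_taperedPareto_iff hα0 hb0.le).1 (integrable_sq_sub_taperedPareto hα0 hb _))

end Law

section Standardized

variable {Ω : Type*} {mΩ : MeasurableSpace Ω} {P : Measure Ω} [IsProbabilityMeasure P] {X : Ω → ℝ}
  {α b p : ℝ}

lemma integral_abs_sub_integral_rpow_le_of_hasLaw_taperedPareto (hα : 0 ≤ α) (hp : 1 ≤ p)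
    (hαp : α < p) (hb : 1 ≤ b) (hX : HasLaw X (taperedPareto α b) P) :
    ∫ ω, |X ω - P[X]| ^ p ∂P ≤ 2 * (taperedParetoMomentConst α p * b ^ (p - α)) := by
  have hX_nonneg : ∀ᵐ ω ∂P, 0 ≤ X ω :=
    ((hX.ae_iff measurableSet_Ici.mem).2 (ae_taperedPareto_one_le α b)).mono
      fun _ (hω : 1 ≤ _) => zero_le_one.trans hω
  have hint (q : ℝ) (hq : 0 ≤ q) : Integrable (fun ω => X ω ^ q) P := by
    have := integrable_rpow_taperedPareto hα hq hb
    rw [← hX.map_eq] at this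
    exact this.comp_aemeasurable hX.aemeasurable
  have hmoment : ∫ ω, X ω ^ p ∂P = ∫ x, x ^ p ∂taperedPareto α b :=
    hX.integral_comp (f := fun x => x ^ p) (by fun_prop)
  calc ∫ ω, |X ω - P[X]| ^ p ∂P ≤ 2 * ∫ ω, X ω ^ p ∂P :=
        integral_abs_sub_integral_rpow_le hp hX_nonneg
          (by simpa only [Real.rpow_one] using hint 1 zero_le_one) (hint p (by linarith))
    _ ≤ 2 * (taperedParetoMomentConst α p * b ^ (p - α)) := by
        rw [hmoment]
        gcongr
        exact integral_rpow_taperedPareto_le hα hαp hb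

lemma standardizedAbsMoment_le_of_hasLaw_taperedPareto (hα0 : 0 < α) (hα2 : α < 2) (hp : 2 ≤ p)
    (hb : 1 ≤ b) (hX : HasLaw X (taperedPareto α b) P) :
    standardizedAbsMoment p X P ≤
      2 * taperedParetoMomentConst α p / (α / 384) ^ (p / 2) * (b ^ (α / 2)) ^ (p - 2) := by
  have hb0 : 0 < b := by linarith
  have hnum := integral_abs_sub_integral_rpow_le_of_hasLaw_taperedPareto hα0.le
    (by linarith) (by linarith : α < p) hb hX
  have hden : α / 384 * b ^ (2 - α) ≤ Var[X; P] :=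
    hX.variance_eq ▸ le_variance_taperedPareto hα0.le hα2.le hb
  have hpow : b ^ (p - α) = (b ^ (2 - α)) ^ (p / 2) * (b ^ (α / 2)) ^ (p - 2) := by
    rw [← Real.rpow_mul hb0.le, ← Real.rpow_mul hb0.le, ← Real.rpow_add hb0]
    ring_nf
  calc standardizedAbsMoment p X P
      ≤ 2 * (taperedParetoMomentConst α p * b ^ (p - α)) /
          (α / 384 * b ^ (2 - α)) ^ (p / 2) := by
        unfold standardizedAbsMoment
        gcongr
        exact (integral_nonneg fun _ => by positivity).trans hnum
    _ = _ := by
        rw [Real.mul_rpow (by positivity) (by positivity), hpow]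
        field_simp

end Standardized

theorem lyapunov_ratio_tendsto_zero_general {α p : ℝ} (hα0 : 0 < α) (hα2 : α < 2) (hp : 2 < p)
    {τ : Type*} {l : Filter τ} {Ω ι : τ → Type*} [∀ t, MeasurableSpace (Ω t)]
    {P : ∀ t, Measure (Ω t)} [∀ t, IsProbabilityMeasure (P t)] {X : ∀ t, Ω t → ℝ} {b c : τ → ℝ}
    {d : ∀ t, ι t → ℝ} (hb : ∀ᶠ t in l, 1 ≤ b t)
    (hX : ∀ᶠ t in l, HasLaw (X t) (taperedPareto α (b t)) (P t))
    (hc : ∀ᶠ t in l, 0 ≤ c t) (hd : ∀ᶠ t in l, Summable fun j => d t j ^ 2)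
    (hdc : ∀ᶠ t in l, ∀ j, |d t j| ≤ c t * √(∑' j, d t j ^ 2))
    (hcb : Tendsto (fun t => c t * b t ^ (α / 2)) l (𝓝 0)) :
    Tendsto (fun t => coeffLyapunovRatio p (d t) * standardizedAbsMoment p (X t) (P t))
      l (𝓝 0) := by
  set K := 2 * taperedParetoMomentConst α p / (α / 384) ^ (p / 2)
  have hlim : Tendsto (fun t => K * (c t * b t ^ (α / 2)) ^ (p - 2)) l (𝓝 0) := by
    simpa [Real.zero_rpow (sub_pos.2 hp).ne'] using
      (hcb.rpow_const (Or.inr (sub_pos.2 hp).le)).const_mul K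
  refine squeeze_zero' (Eventually.of_forall fun t =>
    mul_nonneg (coeffLyapunovRatio_nonneg _ _) (standardizedAbsMoment_nonneg _ _ _)) ?_ hlim
  filter_upwards [hb, hX, hc, hd, hdc] with t hb hX hc hd hdc
  have : 0 ≤ b t := by linarith
  calc _ ≤ c t ^ (p - 2) * (K * (b t ^ (α / 2)) ^ (p - 2)) :=
        mul_le_mul (coeffLyapunovRatio_le hp.le hc hd hdc)
          (standardizedAbsMoment_le_of_hasLaw_taperedPareto hα0 hα2 hp.le hb hX)
          (standardizedAbsMoment_nonneg _ _ _) (by positivity)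
    _ = K * (c t * b t ^ (α / 2)) ^ (p - 2) := by
        rw [Real.mul_rpow hc (by positivity)]
        ring

lemma tendsto_rpow_neg_half_mul_rpow_rpow {α γ : ℝ} (C : ℝ) (h : γ * α < 1) :
    Tendsto (fun n : ℕ => C * (n : ℝ) ^ (-(1 : ℝ) / 2) * ((n : ℝ) ^ γ) ^ (α / 2)) atTop (𝓝 0) := by
  have hlim : Tendsto (fun n : ℕ => C * (n : ℝ) ^ (-((1 - γ * α) / 2))) atTop (𝓝 0) := by
    simpa using ((tendsto_rpow_neg_atTop (by linarith)).comp
      tendsto_natCast_atTop_atTop).const_mul C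
  refine hlim.congr' ((eventually_gt_atTop 0).mono fun n hn => ?_)
  have hn : (0 : ℝ) < n := Nat.cast_pos.2 hn
  simp only [mul_assoc, ← Real.rpow_mul hn.le, ← Real.rpow_add hn]
  ring_nf

/-- If `ζ_n` has the tapered Pareto density with `b_n = n^γ`, `0 < α < 2`, `γ < 1/α`,
`ξ_n = ζ_n − E ζ_n` is its centering, and coefficients `d_{n,j}` satisfy
`max_j |d_{n,j}| ≤ C n^{-1/2} (∑_j d_{n,j}^2)^{1/2}`, then the Lyapunov ratio
`L(3,n) = (∑_j |d_{n,j}|^3/(∑_j d_{n,j}^2)^{3/2}) · (E|ξ_n|^3/(E ξ_n^2)^{3/2})`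
tends to `0` as `n → ∞`. -/
theorem lyapunov_ratio_tendsto_zero
    (α γ : ℝ) (hα0 : 0 < α) (hα2 : α < 2) (hγ0 : 0 < γ) (hγ : γ < 1 / α)
    {Ω : Type*} [MeasureSpace Ω] [IsProbabilityMeasure (ℙ : Measure Ω)]
    (ζ : ℕ → Ω → ℝ) (hmeas : ∀ n, Measurable (ζ n))
    (hlaw : ∀ n : ℕ, 1 ≤ n →
      Measure.map (ζ n) ℙ =
        volume.withDensity fun x => ENNReal.ofReal (taperedParetoDensity α ((n : ℝ) ^ γ) x))
    (d : ℕ → ℤ → ℝ) (hdsum : ∀ n, Summable fun j : ℤ => (d n j) ^ 2)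
    (C : ℝ) (hC : 0 < C)
    (hd : ∀ n : ℕ, 1 ≤ n → ∀ j : ℤ,
      |d n j| ≤ C * (n : ℝ) ^ (-(1 : ℝ) / 2) * (∑' j : ℤ, (d n j) ^ 2) ^ ((1 : ℝ) / 2)) :
    Tendsto
      (fun n : ℕ =>
        ((∑' j : ℤ, |d n j| ^ 3) / (∑' j : ℤ, (d n j) ^ 2) ^ ((3 : ℝ) / 2)) *
          ((∫ ω, |ζ n ω - ∫ ω', ζ n ω'| ^ 3) /
            (∫ ω, (ζ n ω - ∫ ω', ζ n ω') ^ 2) ^ ((3 : ℝ) / 2)))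
      atTop (nhds 0) := by
  have hn1 : ∀ᶠ n : ℕ in atTop, 1 ≤ n := eventually_ge_atTop 1
  have hratio := lyapunov_ratio_tendsto_zero_general hα0 hα2 (p := 3) (by norm_num) (l := atTop)
    (hn1.mono fun n hn => Real.one_le_rpow (Nat.one_le_cast.2 hn) hγ0.le)
    (hn1.mono fun n hn => ⟨(hmeas n).aemeasurable, hlaw n hn⟩)
    (Eventually.of_forall fun n => by positivity) (Eventually.of_forall hdsum)
    (hn1.mono fun n hn => by simpa only [Real.sqrt_eq_rpow] using hd n hn)
    (tendsto_rpow_neg_half_mul_rpow_rpow C ((lt_div_iff₀ hα0).1 hγ))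
  simpa only [coeffLyapunovRatio, standardizedAbsMoment, Real.rpow_ofNat,
    variance_eq_integral (hmeas _).aemeasurable] using hratio
end
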